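/- Let Γ⃗₀ be a shape field on a finite set E ⊂ ℝⁿ, with l-th refinements Γ⃗_l. Let l* ≥ 1, M₀ > 0, x₀ ∈ E, and P₀ ∈ Γ_{l*}(x₀, M₀). Then there is a constant C* depending only on m, n, l* such that for any S ⊆ E with x₀ ∈ S and #(S) ≤ l*, there exists a Whitney field P⃗^S = (P^x)_{x∈S} satisfying: P^x ∈ Γ₀(x, C*M₀) for all x ∈ S; |∂^β(P^x − P^y)(x)| ≤ C*M₀|x−y|^{m−|β|} for all x, y ∈ S and |β| ≤ m−1; and P^{x₀} = P₀. -/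

import Mathlib

/-!
The Whitney field is built one point at a time, starting from `P₀` at `x₀`. Suppose it is defined
on `U ∋ x₀`, with values in the `(l + 1)`-st refinement, and let `z ∉ U` be a new point. If `p` is
the point of `U` nearest to `z`, the refinement condition for `P p` yields `P z` in the `l`-th
refinement that is compatible with `P p`. For any other `x ∈ U`, `|p - z| ≤ |x - z|` and
`|x - p| ≤ 2 |x - z|`, so that writing `P x - P z = (P x - P p) + (P p - P z)` and moving the base
point of the second term from `p` to `x` gives compatibility of `P x` and `P z`, with a larger
constant (`exists_whitney_field`). Since `#(S) ≤ lstar`, at most `lstar - 1` levels are used, and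
all values lie in `Γ₀` because refinements decrease (`refineN_succ_subset`).

Moving the base point is a Taylor estimate (`pdEval_le_of_dist_le`), obtained from the mean value
inequality by descending induction on the order of the derivative.
-/

noncomputable section

/-- Iterated partial derivative `∂^β` of a multivariate polynomial. -/
def pdiff {n : ℕ} (β : Fin n → ℕ) (P : MvPolynomial (Fin n) ℝ) :
    MvPolynomial (Fin n) ℝ :=
  (List.finRange n).foldr (fun i Q => (fun R => MvPolynomial.pderiv i R)^[β i] Q) P

/-- `∂^β P` evaluated at a point of Euclidean space. -/
def pdEval {n : ℕ} (β : Fin n → ℕ) (P : MvPolynomial (Fin n) ℝ)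
    (x : EuclideanSpace ℝ (Fin n)) : ℝ :=
  MvPolynomial.eval (fun i => x i) (pdiff β P)

/-- `Γ` is a shape field on `E`. -/
def ShapeField (m n : ℕ) (E : Set (EuclideanSpace ℝ (Fin n)))
    (Γ : EuclideanSpace ℝ (Fin n) → ℝ → Set (MvPolynomial (Fin n) ℝ)) : Prop :=
  ∀ x ∈ E, ∀ M : ℝ, 0 < M → Convex ℝ (Γ x M) ∧ (∀ P ∈ Γ x M, P.totalDegree ≤ m - 1) ∧
    ∀ M' : ℝ, 0 < M' → M' ≤ M → Γ x M' ⊆ Γ x M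

/-- The first refinement `Γ#` of a shape field `Γ`. -/
def refineOnce (m n : ℕ) (E : Set (EuclideanSpace ℝ (Fin n)))
    (Γ : EuclideanSpace ℝ (Fin n) → ℝ → Set (MvPolynomial (Fin n) ℝ)) :
    EuclideanSpace ℝ (Fin n) → ℝ → Set (MvPolynomial (Fin n) ℝ) :=
  fun x M => {Ps | Ps.totalDegree ≤ m - 1 ∧ ∀ y ∈ E, ∃ P ∈ Γ y M,
    ∀ β : Fin n → ℕ, (∑ i, β i) ≤ m - 1 →
      |pdEval β (Ps - P) x| ≤ M * dist x y ^ (m - ∑ i, β i)}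

/-- The `l`-th refinement of a shape field. -/
def refineN (m n : ℕ) (E : Set (EuclideanSpace ℝ (Fin n)))
    (Γ : EuclideanSpace ℝ (Fin n) → ℝ → Set (MvPolynomial (Fin n) ℝ)) :
    ℕ → EuclideanSpace ℝ (Fin n) → ℝ → Set (MvPolynomial (Fin n) ℝ)
  | 0 => Γ
  | l + 1 => refineOnce m n E (refineN m n E Γ l)

/-! ### Iterated partial derivatives of polynomials -/

lemma pdiff_sub {n : ℕ} (β : Fin n → ℕ) (P Q : MvPolynomial (Fin n) ℝ) :
    pdiff β (P - Q) = pdiff β P - pdiff β Q := by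
  unfold pdiff
  induction List.finRange n with
  | nil => rfl
  | cons i L ih =>
    simp only [List.foldr_cons, ih]
    exact iterate_map_sub (MvPolynomial.pderiv i) _ _ _

lemma pdEval_sub {n : ℕ} (β : Fin n → ℕ) (P Q : MvPolynomial (Fin n) ℝ)
    (x : EuclideanSpace ℝ (Fin n)) :
    pdEval β (P - Q) x = pdEval β P x - pdEval β Q x := by
  simp [pdEval, pdiff_sub]

lemma pderiv_comm {n : ℕ} (i j : Fin n) (P : MvPolynomial (Fin n) ℝ) :
    MvPolynomial.pderiv i (MvPolynomial.pderiv j P) =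
      MvPolynomial.pderiv j (MvPolynomial.pderiv i P) := by
  by_cases h : i = j
  · rw [h]
  ext s
  simp only [MvPolynomial.coeff_pderiv, add_right_comm s (Finsupp.single i 1), Finsupp.add_apply,
    Finsupp.single_eq_of_ne h, Finsupp.single_eq_of_ne (Ne.symm h), add_zero]
  ring

lemma pdiff_zero {n : ℕ} (P : MvPolynomial (Fin n) ℝ) : pdiff 0 P = P := by
  unfold pdiff
  induction List.finRange n with
  | nil => rfl
  | cons i L _ => simp_all

lemma pdiff_add_single {n : ℕ} (β : Fin n → ℕ) (i : Fin n) (P : MvPolynomial (Fin n) ℝ) :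
    pdiff (β + Pi.single i 1) P = MvPolynomial.pderiv i (pdiff β P) := by
  have key : ∀ L : List (Fin n), L.Nodup →
      L.foldr (fun j Q => (fun R => MvPolynomial.pderiv j R)^[(β + Pi.single i 1 : Fin n → ℕ) j] Q) P =
      if i ∈ L then MvPolynomial.pderiv i
        (L.foldr (fun j Q => (fun R => MvPolynomial.pderiv j R)^[β j] Q) P)
      else L.foldr (fun j Q => (fun R => MvPolynomial.pderiv j R)^[β j] Q) P := by
    intro L
    induction L with
    | nil => simp
    | cons j L ih =>
      intro hL
      rw [List.nodup_cons] at hL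
      rw [List.foldr_cons, List.foldr_cons, ih hL.2]
      by_cases hij : i = j
      · subst hij
        simp [hL.1, Function.iterate_succ_apply']
      · have hc : Function.Commute (fun R : MvPolynomial (Fin n) ℝ => MvPolynomial.pderiv i R)
            (fun R => MvPolynomial.pderiv j R) := fun R => pderiv_comm i j R
        simp only [List.mem_cons, hij, false_or, Pi.add_apply, Pi.single_apply, Ne.symm hij,
          if_false, add_zero]
        split_ifs
        · exact ((hc.iterate_right (β j)) _).symm
        · rfl
  have h := key _ (List.nodup_finRange n)
  rwa [if_pos (List.mem_finRange i)] at h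

lemma pderiv_eq_zero_or_totalDegree {n : ℕ} (i : Fin n) (P : MvPolynomial (Fin n) ℝ) :
    MvPolynomial.pderiv i P = 0 ∨
      (MvPolynomial.pderiv i P).totalDegree + 1 ≤ P.totalDegree := by
  by_cases h : MvPolynomial.pderiv i P = 0
  · exact Or.inl h
  right
  obtain ⟨s, hs, hsd⟩ := Finset.exists_mem_eq_sup _ (MvPolynomial.support_nonempty.2 h)
    (fun s : Fin n →₀ ℕ => s.sum fun _ e => e)
  have h1 : s + Finsupp.single i 1 ∈ P.support := by
    rw [MvPolynomial.mem_support_iff, MvPolynomial.coeff_pderiv] at hs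
    exact MvPolynomial.mem_support_iff.2 (left_ne_zero_of_mul hs)
  have h2 := MvPolynomial.le_totalDegree h1
  rw [Finsupp.sum_add_index' (fun _ => rfl) (fun _ _ _ => rfl)] at h2
  simp only [Finsupp.sum_single_index] at h2
  rw [MvPolynomial.totalDegree, hsd]
  exact h2

lemma pdiff_eq_zero {n : ℕ} (β : Fin n → ℕ) (P : MvPolynomial (Fin n) ℝ)
    (h : P.totalDegree < ∑ i, β i) : pdiff β P = 0 := by
  have it : ∀ (i : Fin n) (k : ℕ) (Q : MvPolynomial (Fin n) ℝ),
      (fun R => MvPolynomial.pderiv i R)^[k] Q = 0 ∨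
      ((fun R => MvPolynomial.pderiv i R)^[k] Q).totalDegree + k ≤ Q.totalDegree := by
    intro i k Q
    induction k with
    | zero => right; simp
    | succ k ih =>
      rw [Function.iterate_succ_apply']
      rcases ih with h | h
      · left; rw [h]; exact map_zero _
      · rcases pderiv_eq_zero_or_totalDegree i ((fun R => MvPolynomial.pderiv i R)^[k] Q) with h' | h'
        · exact Or.inl h'
        · right; omega
  have key : ∀ L : List (Fin n),
      L.foldr (fun j Q => (fun R => MvPolynomial.pderiv j R)^[β j] Q) P = 0 ∨
      (L.foldr (fun j Q => (fun R => MvPolynomial.pderiv j R)^[β j] Q) P).totalDegree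
        + (L.map β).sum ≤ P.totalDegree := by
    intro L
    induction L with
    | nil => right; simp
    | cons j L ih =>
      simp only [List.foldr_cons, List.map_cons, List.sum_cons]
      rcases ih with h | h
      · left; rw [h]; exact iterate_map_zero (MvPolynomial.pderiv j) _
      · rcases it j (β j) (L.foldr (fun j Q => (fun R => MvPolynomial.pderiv j R)^[β j] Q) P)
          with h' | h'
        · exact Or.inl h'
        · right; omega
  rcases key (List.finRange n) with h' | h'
  · exact h'
  · rw [← List.ofFn_eq_map, List.sum_ofFn] at h'
    omega

/-! ### Moving the base point -/

lemma hasDerivAt_eval_line {n : ℕ} (P : MvPolynomial (Fin n) ℝ) (p v : Fin n → ℝ) (t : ℝ) :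
    HasDerivAt (fun t : ℝ => MvPolynomial.eval (fun i => p i + t * v i) P)
      (∑ i, v i * MvPolynomial.eval (fun i => p i + t * v i) (MvPolynomial.pderiv i P)) t := by
  induction P using MvPolynomial.induction_on with
  | C a => simpa using hasDerivAt_const t a
  | add P Q hP hQ =>
    simp only [map_add, mul_add, Finset.sum_add_distrib]
    exact hP.add hQ
  | mul_X P j hP =>
    have hX : HasDerivAt (fun t : ℝ => p j + t * v j) (v j) t := by
      simpa using ((hasDerivAt_id t).mul_const (v j)).const_add (p j)
    have := hP.mul hX
    simp only [map_mul, MvPolynomial.eval_X]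
    refine this.congr_deriv ?_
    simp only [MvPolynomial.pderiv_mul, MvPolynomial.pderiv_X, map_add, map_mul,
      MvPolynomial.eval_X, mul_add (v _), Finset.sum_add_distrib, Finset.sum_mul]
    congr 1
    · exact Finset.sum_congr rfl fun i _ => by ring
    · rw [Finset.sum_eq_single j]
      · simp; ring
      · intro i _ hij; simp [hij.symm]
      · simp

/-- Taylor-type estimate: control of all derivatives of a polynomial of degree `≤ m - 1` at `p`,
at scale `r`, gives the same control at every point of the ball of radius `2r` about `p`, up to the
factor `(1 + 2n)^m`. It is proved by descending induction on the order `|β| ≥ m - j`, derivatives of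
order `≥ m` being zero. -/
lemma pdEval_le_of_dist_le_aux {m n : ℕ} (hm : 0 < m) (Q : MvPolynomial (Fin n) ℝ)
    (hQ : Q.totalDegree ≤ m - 1) (p : EuclideanSpace ℝ (Fin n)) (A r : ℝ) (hA : 0 ≤ A)
    (hr : 0 ≤ r)
    (h : ∀ β : Fin n → ℕ, (∑ i, β i) ≤ m - 1 → |pdEval β Q p| ≤ A * r ^ (m - ∑ i, β i)) (j : ℕ) :
    ∀ β : Fin n → ℕ, m ≤ (∑ i, β i) + j → ∀ x : EuclideanSpace ℝ (Fin n), dist x p ≤ 2 * r →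
      |pdEval β Q x| ≤ (1 + 2 * n) ^ j * A * r ^ (m - ∑ i, β i) := by
  have hzero : ∀ (j : ℕ) (β : Fin n → ℕ), m ≤ ∑ i, β i → ∀ x : EuclideanSpace ℝ (Fin n),
      |pdEval β Q x| ≤ (1 + 2 * n) ^ j * A * r ^ (m - ∑ i, β i) := by
    intro j β hβ x
    rw [pdEval, pdiff_eq_zero β Q (by omega)]
    simp only [map_zero, abs_zero]
    positivity
  induction j with
  | zero => intro β hβ x _; exact hzero 0 β hβ x
  | succ j ih =>
    intro β hβ x hx
    by_cases hβm : m ≤ ∑ i, β i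
    · exact hzero _ β hβm x
    push Not at hβm
    set k := m - 1 - ∑ i, β i with hk
    have hmk : m - ∑ i, β i = k + 1 := by omega
    have hv : ∀ i, |x i - p i| ≤ 2 * r := fun i =>
      (by simpa [dist_eq_norm] using PiLp.norm_apply_le (x - p) i : |x i - p i| ≤ dist x p).trans hx
    have hline : ∀ (t : ℝ) (i : Fin n), t ∈ Set.Ico (0 : ℝ) 1 →
        |MvPolynomial.eval (fun i => p i + t * (x i - p i)) (MvPolynomial.pderiv i (pdiff β Q))|
          ≤ (1 + 2 * n) ^ j * A * r ^ k := by
      intro t i ht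
      have hs : ∑ l, (β + Pi.single i 1 : Fin n → ℕ) l = ∑ l, β l + 1 := by
        simp [Finset.sum_add_distrib]
      have := ih (β + Pi.single i 1) (by omega) (p + t • (x - p)) (by
        rw [dist_eq_norm, add_sub_cancel_left, norm_smul, Real.norm_of_nonneg ht.1, ← dist_eq_norm]
        nlinarith [ht.1, ht.2, dist_nonneg (x := x) (y := p)])
      rw [hs, pdEval, pdiff_add_single, show m - (∑ l, β l + 1) = k by omega] at this
      simpa using this
    have hmv := norm_image_sub_le_of_norm_deriv_le_segment_01'
      (f := fun t : ℝ => MvPolynomial.eval (fun i => p i + t * (x i - p i)) (pdiff β Q))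
      (C := n * (2 * r * ((1 + 2 * n) ^ j * A * r ^ k)))
      (fun t _ => (hasDerivAt_eval_line (pdiff β Q) (fun i => p i)
        (fun i => x i - p i) t).hasDerivWithinAt)
      (fun t ht => by
        refine (norm_sum_le _ _).trans ?_
        refine (Finset.sum_le_card_nsmul _ _ (2 * r * ((1 + 2 * n) ^ j * A * r ^ k)) ?_).trans ?_
        · intro i _
          rw [norm_mul, Real.norm_eq_abs, Real.norm_eq_abs]
          exact mul_le_mul (hv i) (hline t i ht) (abs_nonneg _) (by positivity)
        · simp)
    simp only [one_mul, zero_mul, add_zero, add_sub_cancel, Real.norm_eq_abs] at hmv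
    have hp := h β (by omega)
    rw [hmk] at hp ⊢
    change |pdEval β Q x - pdEval β Q p| ≤ _ at hmv
    have htri : |pdEval β Q x| ≤ |pdEval β Q x - pdEval β Q p| + |pdEval β Q p| := by
      simpa using abs_add_le (pdEval β Q x - pdEval β Q p) (pdEval β Q p)
    have hone : (1 : ℝ) ≤ (1 + 2 * n) ^ j := one_le_pow₀ (by linarith [n.cast_nonneg (α := ℝ)])
    have hX : 0 ≤ A * r ^ (k + 1) := by positivity
    calc |pdEval β Q x|
        ≤ n * (2 * r * ((1 + 2 * n) ^ j * A * r ^ k)) + 1 * (A * r ^ (k + 1)) := by linarith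
      _ ≤ n * (2 * r * ((1 + 2 * n) ^ j * A * r ^ k)) + (1 + 2 * n) ^ j * (A * r ^ (k + 1)) := by
          gcongr
      _ = (1 + 2 * n) ^ (j + 1) * A * r ^ (k + 1) := by ring

lemma pdEval_le_of_dist_le {m n : ℕ} (hm : 0 < m) (Q : MvPolynomial (Fin n) ℝ)
    (hQ : Q.totalDegree ≤ m - 1) (p : EuclideanSpace ℝ (Fin n)) (A r : ℝ) (hA : 0 ≤ A)
    (hr : 0 ≤ r)
    (h : ∀ β : Fin n → ℕ, (∑ i, β i) ≤ m - 1 → |pdEval β Q p| ≤ A * r ^ (m - ∑ i, β i))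
    (β : Fin n → ℕ) (x : EuclideanSpace ℝ (Fin n)) (hx : dist x p ≤ 2 * r) :
    |pdEval β Q x| ≤ (1 + 2 * n) ^ m * A * r ^ (m - ∑ i, β i) :=
  pdEval_le_of_dist_le_aux hm Q hQ p A r hA hr h m β (by omega) x hx

lemma eq_zero_of_pdEval {m n : ℕ} (hm : 0 < m) (Q : MvPolynomial (Fin n) ℝ)
    (hQ : Q.totalDegree ≤ m - 1) (p : EuclideanSpace ℝ (Fin n))
    (h : ∀ β : Fin n → ℕ, (∑ i, β i) ≤ m - 1 → pdEval β Q p = 0) : Q = 0 := by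
  refine MvPolynomial.funext fun v => ?_
  have := pdEval_le_of_dist_le hm Q hQ p 0 (dist (WithLp.toLp 2 v) p) le_rfl dist_nonneg
    (fun β hβ => by simp [h β hβ]) 0 (WithLp.toLp 2 v)
    (by linarith [dist_nonneg (x := WithLp.toLp 2 v) (y := p)])
  simpa [pdEval, pdiff_zero] using this

/-! ### Refinements and the inductive construction -/

lemma totalDegree_le_of_mem_refineN {m n : ℕ} {E : Set (EuclideanSpace ℝ (Fin n))}
    {Γ₀ : EuclideanSpace ℝ (Fin n) → ℝ → Set (MvPolynomial (Fin n) ℝ)}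
    (hΓ : ShapeField m n E Γ₀) {M : ℝ} (hM : 0 < M) {x : EuclideanSpace ℝ (Fin n)} (hx : x ∈ E)
    (l : ℕ) {P : MvPolynomial (Fin n) ℝ} (hP : P ∈ refineN m n E Γ₀ l x M) :
    P.totalDegree ≤ m - 1 := by
  cases l with
  | zero => exact (hΓ x hx M hM).2.1 P hP
  | succ l => exact hP.1

lemma totalDegree_sub_le_of_le {n d : ℕ} {P Q : MvPolynomial (Fin n) ℝ}
    (hP : P.totalDegree ≤ d) (hQ : Q.totalDegree ≤ d) : (P - Q).totalDegree ≤ d :=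
  (MvPolynomial.totalDegree_sub P Q).trans (max_le hP hQ)

/-- Refinements decrease: testing the definition of the refinement at `y = x` forces the
`m - 1` jets at `x` of the two polynomials to agree, because each exponent `m - |β|` is positive. -/
lemma refineN_succ_subset {m n : ℕ} (hm : 0 < m) {E : Set (EuclideanSpace ℝ (Fin n))}
    {Γ₀ : EuclideanSpace ℝ (Fin n) → ℝ → Set (MvPolynomial (Fin n) ℝ)}
    (hΓ : ShapeField m n E Γ₀) {M : ℝ} (hM : 0 < M) {x : EuclideanSpace ℝ (Fin n)} (hx : x ∈ E)
    (l : ℕ) : refineN m n E Γ₀ (l + 1) x M ⊆ refineN m n E Γ₀ l x M := by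
  intro P hP
  obtain ⟨Q, hQ, hPQ⟩ := hP.2 x hx
  have h0 : P - Q = 0 := by
    refine eq_zero_of_pdEval hm _
      (totalDegree_sub_le_of_le hP.1 (totalDegree_le_of_mem_refineN hΓ hM hx l hQ)) x fun β hβ => ?_
    have := hPQ β hβ
    rw [dist_self, zero_pow (by omega), mul_zero] at this
    exact abs_nonpos_iff.1 this
  rwa [sub_eq_zero.1 h0]

lemma refineN_subset_zero {m n : ℕ} (hm : 0 < m) {E : Set (EuclideanSpace ℝ (Fin n))}
    {Γ₀ : EuclideanSpace ℝ (Fin n) → ℝ → Set (MvPolynomial (Fin n) ℝ)}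
    (hΓ : ShapeField m n E Γ₀) {M : ℝ} (hM : 0 < M) {x : EuclideanSpace ℝ (Fin n)} (hx : x ∈ E)
    (l : ℕ) : refineN m n E Γ₀ l x M ⊆ Γ₀ x M := by
  induction l with
  | zero => exact subset_rfl
  | succ l ih => exact (refineN_succ_subset hm hΓ hM hx l).trans ih

/-- The Whitney field on `T ∪ {x₀}`, by induction on `#T`: a new point `z` receives a polynomial
supplied by the refinement condition at the old point nearest to `z`, and the level of refinement
drops by one at each step. -/
lemma exists_whitney_field {m n : ℕ} (hm : 0 < m) (k : ℕ) :
    ∃ C : ℝ, 1 ≤ C ∧ ∀ (E : Set (EuclideanSpace ℝ (Fin n)))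
      (Γ₀ : EuclideanSpace ℝ (Fin n) → ℝ → Set (MvPolynomial (Fin n) ℝ)),
      ShapeField m n E Γ₀ → ∀ M : ℝ, 0 < M → ∀ x₀ ∈ E, ∀ l : ℕ,
      ∀ P₀ ∈ refineN m n E Γ₀ (l + k) x₀ M,
      ∀ T : Finset (EuclideanSpace ℝ (Fin n)), T.card = k → x₀ ∉ T → (∀ x ∈ T, x ∈ E) →
      ∃ P : EuclideanSpace ℝ (Fin n) → MvPolynomial (Fin n) ℝ,
        P x₀ = P₀ ∧ (∀ x ∈ insert x₀ T, P x ∈ refineN m n E Γ₀ l x M) ∧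
        (∀ x ∈ insert x₀ T, ∀ y ∈ insert x₀ T, ∀ β : Fin n → ℕ, (∑ i, β i) ≤ m - 1 →
          |pdEval β (P x - P y) x| ≤ C * M * dist x y ^ (m - ∑ i, β i)) := by
  have hB1 : (1 : ℝ) ≤ (1 + 2 * n) ^ m := one_le_pow₀ (by linarith [n.cast_nonneg (α := ℝ)])
  set B : ℝ := (1 + 2 * n) ^ m with hB
  have hself : ∀ (P : MvPolynomial (Fin n) ℝ) (x : EuclideanSpace ℝ (Fin n)) (β : Fin n → ℕ)
      (D : ℝ), 0 ≤ D → |pdEval β (P - P) x| ≤ D * dist x x ^ (m - ∑ i, β i) := by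
    intro P x β D hD
    rw [pdEval_sub, sub_self, abs_zero]
    positivity
  induction k with
  | zero =>
    refine ⟨1, le_rfl, fun E Γ₀ hΓ M hM x₀ hx₀ l P₀ hP₀ T hT _ _ => ⟨fun _ => P₀, rfl, ?_, ?_⟩⟩
    · rw [Finset.card_eq_zero.1 hT]
      intro x hx
      rw [Finset.mem_insert] at hx
      obtain rfl : x = x₀ := by simpa using hx
      exact hP₀
    · rw [Finset.card_eq_zero.1 hT]
      intro x hx y hy β _
      obtain rfl : x = x₀ := by simpa using hx
      obtain rfl : y = x := by simpa using hy
      exact hself _ _ _ _ (by positivity)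
  | succ k ih =>
    obtain ⟨C, hC, ih⟩ := ih
    have h2 : (1 : ℝ) ≤ 2 ^ m := one_le_pow₀ (by norm_num)
    have hD : 1 ≤ C * 2 ^ m + B := by nlinarith
    refine ⟨B * (C * 2 ^ m + B), by nlinarith, ?_⟩
    intro E Γ₀ hΓ M hM x₀ hx₀ l P₀ hP₀ T hT hxT hTE
    obtain ⟨z, T', hz, rfl, hT'⟩ := Finset.card_eq_succ.1 hT
    simp only [Finset.mem_insert, not_or] at hxT
    obtain ⟨P, hPx₀, hPΓ, hPW⟩ := ih E Γ₀ hΓ M hM x₀ hx₀ (l + 1) P₀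
      (by rwa [add_assoc, add_comm 1 k]) T' hT' hxT.2 (fun x hx => hTE x (by simp [hx]))
    set U := insert x₀ T' with hU
    have hzE : z ∈ E := hTE z (by simp)
    have hUE : ∀ x ∈ U, x ∈ E := by
      intro x hx
      rcases Finset.mem_insert.1 hx with rfl | hx
      · exact hx₀
      · exact hTE x (by simp [hx])
    have hzU : ∀ x ∈ U, x ≠ z := by
      rintro x hx rfl
      rcases Finset.mem_insert.1 hx with h | h
      · exact hxT.1 h.symm
      · exact hz h
    obtain ⟨p, hpU, hpmin⟩ := Finset.exists_min_image U (fun x => dist x z) ⟨x₀, by simp [hU]⟩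
    obtain ⟨Pz, hPzΓ, hPz⟩ := (hPΓ p hpU).2 z hzE
    have hdeg : ∀ x ∈ U, (P x - Pz).totalDegree ≤ m - 1 := fun x hx =>
      totalDegree_sub_le_of_le (totalDegree_le_of_mem_refineN hΓ hM (hUE x hx) _ (hPΓ x hx))
        (totalDegree_le_of_mem_refineN hΓ hM hzE _ hPzΓ)
    -- Compare with the nearest point `p`: `|p - z| ≤ |x - z|` and hence `|x - p| ≤ 2 |x - z|`.
    have hxz : ∀ x ∈ U, ∀ β : Fin n → ℕ, (∑ i, β i) ≤ m - 1 →
        |pdEval β (P x - Pz) x| ≤ (C * 2 ^ m + B) * M * dist x z ^ (m - ∑ i, β i) := by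
      intro x hx β hβ
      have hpz : dist p z ≤ dist x z := hpmin x hx
      have hxp : dist x p ≤ 2 * dist x z := by
        linarith [dist_triangle x z p, dist_comm p z]
      have h1 : |pdEval β (P x - P p) x| ≤ C * M * (2 ^ m * dist x z ^ (m - ∑ i, β i)) := by
        refine (hPW x hx p hpU β hβ).trans ?_
        gcongr
        calc dist x p ^ (m - ∑ i, β i) ≤ (2 * dist x z) ^ (m - ∑ i, β i) := by gcongr
          _ = 2 ^ (m - ∑ i, β i) * dist x z ^ (m - ∑ i, β i) := mul_pow _ _ _
          _ ≤ 2 ^ m * dist x z ^ (m - ∑ i, β i) := by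
            gcongr
            · norm_num
            · omega
      have h2 := pdEval_le_of_dist_le hm (P p - Pz) (hdeg p hpU) p M (dist x z) hM.le dist_nonneg
        (fun β hβ => (hPz β hβ).trans (by gcongr)) β x hxp
      have h3 : pdEval β (P x - Pz) x = pdEval β (P x - P p) x + pdEval β (P p - Pz) x := by
        simp only [pdEval_sub]; ring
      rw [h3]
      refine (abs_add_le _ _).trans ((add_le_add h1 h2).trans (le_of_eq ?_))
      ring
    have hzx : ∀ x ∈ U, ∀ β : Fin n → ℕ, (∑ i, β i) ≤ m - 1 →
        |pdEval β (Pz - P x) z| ≤ B * (C * 2 ^ m + B) * M * dist z x ^ (m - ∑ i, β i) := by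
      intro x hx β hβ
      have := pdEval_le_of_dist_le hm (P x - Pz) (hdeg x hx) x ((C * 2 ^ m + B) * M) (dist x z)
        (by positivity) dist_nonneg (hxz x hx) β z
        (by linarith [dist_comm x z, dist_nonneg (x := x) (y := z)])
      rw [pdEval_sub, abs_sub_comm, ← pdEval_sub, dist_comm z x]
      exact this.trans (le_of_eq (by ring))
    have hle1 : C ≤ B * (C * 2 ^ m + B) := by nlinarith
    have hle2 : C * 2 ^ m + B ≤ B * (C * 2 ^ m + B) := by nlinarith
    refine ⟨Function.update P z Pz, ?_, ?_, ?_⟩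
    · rw [Function.update_of_ne hxT.1, hPx₀]
    · intro x hx
      rw [Finset.insert_comm, Finset.mem_insert] at hx
      rcases hx with rfl | hx
      · rwa [Function.update_self]
      · rw [Function.update_of_ne (hzU x hx)]
        exact refineN_succ_subset hm hΓ hM (hUE x hx) l (hPΓ x hx)
    · intro x hx y hy β hβ
      rw [Finset.insert_comm, Finset.mem_insert] at hx hy
      rcases hx with rfl | hx
      · rcases hy with rfl | hy
        · exact hself _ _ _ _ (by positivity)
        · rw [Function.update_self, Function.update_of_ne (hzU y hy)]
          exact hzx y hy β hβ
      · rw [Function.update_of_ne (hzU x hx)]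
        rcases hy with rfl | hy
        · rw [Function.update_self]
          exact (hxz x hx β hβ).trans (by gcongr)
        · rw [Function.update_of_ne (hzU y hy)]
          exact (hPW x hx y hy β hβ).trans (by gcongr)

/-- Lemma 11.3: if `P₀ ∈ Γ_{l*}(x₀, M₀)`, then for any `S ⊆ E` containing `x₀`
with `#(S) ≤ l*`, there is a Whitney field `(P^x)_{x ∈ S}` with `P^x ∈ Γ₀(x, C* M₀)`,
`|∂^β (P^x - P^y)(x)| ≤ C* M₀ |x - y|^{m - |β|}` for `x, y ∈ S`, `|β| ≤ m-1`, and
`P^{x₀} = P₀`; here `C*` depends only on `m`, `n`, `l*`. -/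
theorem refinement_yields_whitney_field (m n lstar : ℕ) (hm : 0 < m) (hn : 0 < n)
    (hl : 1 ≤ lstar) :
    ∃ Cstar : ℝ, 0 < Cstar ∧
      ∀ (E : Set (EuclideanSpace ℝ (Fin n))), E.Finite →
      ∀ (Γ₀ : EuclideanSpace ℝ (Fin n) → ℝ → Set (MvPolynomial (Fin n) ℝ)),
        ShapeField m n E Γ₀ →
        ∀ M₀ : ℝ, 0 < M₀ → ∀ x₀ ∈ E, ∀ P₀ ∈ refineN m n E Γ₀ lstar x₀ M₀,
          ∀ S : Set (EuclideanSpace ℝ (Fin n)), S ⊆ E → x₀ ∈ S → S.ncard ≤ lstar →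
            ∃ P : EuclideanSpace ℝ (Fin n) → MvPolynomial (Fin n) ℝ,
              P x₀ = P₀ ∧
              (∀ x ∈ S, P x ∈ Γ₀ x (Cstar * M₀)) ∧
              (∀ x ∈ S, ∀ y ∈ S, ∀ β : Fin n → ℕ, (∑ i, β i) ≤ m - 1 →
                |pdEval β (P x - P y) x| ≤ Cstar * M₀ * dist x y ^ (m - ∑ i, β i)) := by
  -- `#(S \ {x₀})` is at most `lstar - 1`; the constants for all these sizes are combined by a sum.
  choose C hC hW using fun k => exists_whitney_field (m := m) (n := n) hm k
  have hCle : ∀ k < lstar, C k ≤ ∑ i ∈ Finset.range lstar, C i := fun k hk =>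
    Finset.single_le_sum (f := C) (fun i _ => by linarith [hC i]) (Finset.mem_range.2 hk)
  have hC1 : 1 ≤ ∑ i ∈ Finset.range lstar, C i := (hC 0).trans (hCle 0 (by omega))
  refine ⟨∑ i ∈ Finset.range lstar, C i, by linarith, ?_⟩
  intro E hE Γ₀ hΓ M₀ hM₀ x₀ hx₀ P₀ hP₀ S hSE hxS hcard
  have hSf : S.Finite := hE.subset hSE
  set T := hSf.toFinset.erase x₀ with hT
  have hins : ∀ x, x ∈ S → x ∈ insert x₀ T := by
    intro x hx
    rw [hT, Finset.insert_erase (hSf.mem_toFinset.2 hxS)]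
    exact hSf.mem_toFinset.2 hx
  have hTcard : T.card + 1 ≤ lstar := by
    rw [hT, Finset.card_erase_add_one (hSf.mem_toFinset.2 hxS), ← Set.ncard_eq_toFinset_card S hSf]
    exact hcard
  obtain ⟨P, hPx₀, hPΓ, hPW⟩ := hW T.card E Γ₀ hΓ M₀ hM₀ x₀ hx₀ (lstar - T.card) P₀
    (by rwa [Nat.sub_add_cancel (by omega)]) T rfl (by simp [hT])
    (fun x hx => hSE (hSf.mem_toFinset.1 (Finset.mem_of_mem_erase hx)))
  refine ⟨P, hPx₀, fun x hx => ?_, fun x hx y hy β hβ => ?_⟩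
  · exact (hΓ x (hSE hx) _ (by positivity)).2.2 M₀ hM₀ (le_mul_of_one_le_left hM₀.le hC1)
      (refineN_subset_zero hm hΓ hM₀ (hSE hx) _ (hPΓ x (hins x hx)))
  · refine (hPW x (hins x hx) y (hins y hy) β hβ).trans ?_
    have := hCle T.card (by omega)
    gcongr

end
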